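/- The functional τ is tracial for the star product: for all Φ, Ψ ∈ S^c, τ(Φ ⋆ Ψ) = τ(Ψ ⋆ Φ), where τ(Θ) = ∫₀¹∫₀¹ Θ(x, y, 0) dx dy. -/

import Mathlib

/-!
At `p = 0` the two shifts in the star product coincide, so `(Φ ⋆ Ψ)(x, y, 0)` is the sum over `q`
of the translates by `(ħqμ, ħqν)` of `F_q(x, y) = Φ(x, y, q) Ψ(x, y, -q)`. The twists of
`Φ(·, ·, q)` and `Ψ(·, ·, -q)` under `x ↦ x + 1` cancel, so `F_q` is a function on the torus `ℝ²/ℤ²`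
and its integral over the unit square is unchanged by the translation. Hence
`τ(Φ ⋆ Ψ) = ∑_q ∫∫ F_q`, and exchanging `Φ` and `Ψ` only replaces `F_q` by `F_{-q}`.
-/

open MeasureTheory ENNReal

noncomputable section

/-- Membership in the space `S^c` of Rieffel's quantum Heisenberg manifold. -/
structure InSc (c : ℕ) (Φ : ℝ → ℝ → ℤ → ℂ) : Prop where
  smooth : ∀ p : ℤ, ContDiff ℝ (⊤ : ℕ∞) (fun xy : ℝ × ℝ => Φ xy.1 xy.2 p)
  periodic_y : ∀ (x y : ℝ) (p : ℤ), Φ x (y + 1) p = Φ x y p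
  twisted : ∀ (k : ℤ) (x y : ℝ) (p : ℤ),
    Φ (x + k) y p = Complex.exp (2 * Real.pi * Complex.I * ((c : ℂ) * (k : ℂ) * (p : ℂ) * (y : ℂ))) * Φ x y p
  poly_bounded : ∀ (P : Polynomial ℤ) (m n : ℕ) (K : Set (ℝ × ℝ)), IsCompact K →
    ∃ C : ℝ, ∀ (x y : ℝ) (p : ℤ), (x, y) ∈ K →
      |((P.eval p : ℤ) : ℝ)| * ‖iteratedDeriv m (fun x' => iteratedDeriv n (fun y' => Φ x' y' p) y) x‖ ≤ C

/-- The star product on `S^c`. -/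
def starProd (hbar μ ν : ℝ) (Φ Ψ : ℝ → ℝ → ℤ → ℂ) : ℝ → ℝ → ℤ → ℂ :=
  fun x y p => ∑' q : ℤ,
    Φ (x - hbar * ((q - p : ℤ) : ℝ) * μ) (y - hbar * ((q - p : ℤ) : ℝ) * ν) q *
    Ψ (x - hbar * (q : ℝ) * μ) (y - hbar * (q : ℝ) * ν) (p - q)

/-- The involution on `S^c`. -/
def invol (Φ : ℝ → ℝ → ℤ → ℂ) : ℝ → ℝ → ℤ → ℂ :=
  fun x y p => (starRingEnd ℂ) (Φ x y (-p))

/-- The norm `‖·‖_{∞,∞,1}`, valued in `ℝ≥0∞`. -/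
def norm1 (Φ : ℝ → ℝ → ℤ → ℂ) : ℝ≥0∞ :=
  ∑' p : ℤ, ⨆ x : ℝ, ⨆ y : ℝ, (‖Φ x y p‖₊ : ℝ≥0∞)

/-- The representation `π` acting on functions on `ℝ × [0,1) × ℤ`. -/
def piRep (hbar μ ν : ℝ) (Φ ξ : ℝ → ℝ → ℤ → ℂ) : ℝ → ℝ → ℤ → ℂ :=
  fun x y p => ∑' q : ℤ,
    Φ (x - hbar * ((q - 2 * p : ℤ) : ℝ) * μ) (y - hbar * ((q - 2 * p : ℤ) : ℝ) * ν) q *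
    ξ x y (p - q)

/-- Square integrability (with measurability) on `ℝ × [0,1) × ℤ`. -/
def SqInt (ξ : ℝ → ℝ → ℤ → ℂ) : Prop :=
  (∀ p : ℤ, Measurable (fun xy : ℝ × ℝ => ξ xy.1 xy.2 p)) ∧
  (∫⁻ x : ℝ, ∫⁻ y in Set.Ico (0:ℝ) 1, ∑' p : ℤ, ((‖ξ x y p‖₊ : ℝ≥0∞)) ^ 2) < ⊤

/-- The `L²` norm on `ℝ × [0,1) × ℤ`, valued in `ℝ≥0∞`. -/
def l2norm (ξ : ℝ → ℝ → ℤ → ℂ) : ℝ≥0∞ :=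
  (∫⁻ x : ℝ, ∫⁻ y in Set.Ico (0:ℝ) 1, ∑' p : ℤ, ((‖ξ x y p‖₊ : ℝ≥0∞)) ^ 2) ^ (1/2 : ℝ)

/-- The inner product on `L²(ℝ × [0,1) × ℤ)`. -/
def ip (ξ η : ℝ → ℝ → ℤ → ℂ) : ℂ :=
  ∫ x : ℝ, ∫ y in Set.Ico (0:ℝ) 1, ∑' p : ℤ, ξ x y p * (starRingEnd ℂ) (η x y p)

/-- The action of the Heisenberg group. -/
def Lact (c : ℕ) (r s t : ℝ) (Φ : ℝ → ℝ → ℤ → ℂ) : ℝ → ℝ → ℤ → ℂ :=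
  fun x y p => Complex.exp (2 * Real.pi * Complex.I *
    ((p : ℂ) * ((t : ℂ) + (c : ℂ) * (s : ℂ) * ((x : ℂ) - (r : ℂ))))) * Φ (x - r) (y - s) p

/-- The trace `τ`. -/
def tr (Φ : ℝ → ℝ → ℤ → ℂ) : ℂ :=
  ∫ x in (0:ℝ)..1, ∫ y in (0:ℝ)..1, Φ x y 0

/-- The zero mode `Φ⁽⁰⁾`. -/
def zeroMode (Φ : ℝ → ℝ → ℤ → ℂ) : ℝ → ℝ → ℤ → ℂ :=
  fun x y p => if p = 0 then Φ x y 0 else 0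

/-- The derivation `δ₁`. -/
def d1 (Φ : ℝ → ℝ → ℤ → ℂ) : ℝ → ℝ → ℤ → ℂ :=
  fun x y p => -(deriv (fun x' => Φ x' y p) x)

/-- The derivation `δ₂`. -/
def d2 (c : ℕ) (Φ : ℝ → ℝ → ℤ → ℂ) : ℝ → ℝ → ℤ → ℂ :=
  fun x y p => 2 * Real.pi * Complex.I * (c : ℂ) * (p : ℂ) * (x : ℂ) * Φ x y p
    - deriv (fun y' => Φ x y' p) y

/-- The derivation `δ₃`. -/
def d3 (Φ : ℝ → ℝ → ℤ → ℂ) : ℝ → ℝ → ℤ → ℂ :=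
  fun x y p => 2 * Real.pi * Complex.I * (p : ℂ) * Φ x y p

section PeriodicIntegrals

variable {E : Type*} [NormedAddCommGroup E] [NormedSpace ℝ E]

lemma intervalIntegral_comp_sub_right_of_periodic {f : ℝ → E} {T : ℝ}
    (hf : Function.Periodic f T) (s : ℝ) :
    ∫ x in (0 : ℝ)..T, f (x - s) = ∫ x in (0 : ℝ)..T, f x := by
  have h := hf.intervalIntegral_add_eq (0 - s) 0
  rwa [zero_add, sub_add_eq_add_sub, zero_add,
    ← intervalIntegral.integral_comp_sub_right] at h

lemma intervalIntegral_intervalIntegral_comp_sub_right_of_periodic {F : ℝ → ℝ → E} {S T : ℝ}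
    (hS : Function.Periodic F S) (hT : ∀ x, Function.Periodic (F x) T) (s t : ℝ) :
    ∫ x in (0 : ℝ)..S, ∫ y in (0 : ℝ)..T, F (x - s) (y - t) =
      ∫ x in (0 : ℝ)..S, ∫ y in (0 : ℝ)..T, F x y := by
  simp only [fun x => intervalIntegral_comp_sub_right_of_periodic (hT x) t]
  exact intervalIntegral_comp_sub_right_of_periodic
    (hS.comp fun g : ℝ → E => ∫ y in (0 : ℝ)..T, g y) s

end PeriodicIntegrals

section TermwiseIntegration

variable {α β ι E : Type*} [MeasurableSpace α] [MeasurableSpace β] [Countable ι]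
  [NormedAddCommGroup E] [NormedSpace ℝ E] {μ : Measure α} {ν : Measure β}
  [IsFiniteMeasure μ] [IsFiniteMeasure ν] {b : ι → ℝ}

lemma integral_tsum_of_norm_le [CompleteSpace E] {f : ι → α → E}
    (hf : ∀ i, AEStronglyMeasurable (f i) μ) (hb : Summable b) (hfb : ∀ i a, ‖f i a‖ ≤ b i) :
    ∫ a, ∑' i, f i a ∂μ = ∑' i, ∫ a, f i a ∂μ :=
  (hasSum_integral_of_dominated_convergence (fun i _ => b i) hf
    (fun i => .of_forall (hfb i)) (.of_forall fun _ => hb) (integrable_const _)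
    (.of_forall fun a => (hb.of_norm_bounded (hfb · a)).hasSum)).tsum_eq.symm

lemma integral_integral_tsum_of_norm_le [CompleteSpace E] {f : ι → α → β → E}
    (hf : ∀ i, StronglyMeasurable (Function.uncurry (f i))) (hb : Summable b)
    (hfb : ∀ i x y, ‖f i x y‖ ≤ b i) :
    ∫ x, ∫ y, ∑' i, f i x y ∂ν ∂μ = ∑' i, ∫ x, ∫ y, f i x y ∂ν ∂μ := by
  have inner (x : α) : ∫ y, ∑' i, f i x y ∂ν = ∑' i, ∫ y, f i x y ∂ν :=
    integral_tsum_of_norm_le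
      (fun i => ((hf i).comp_measurable measurable_prodMk_left).aestronglyMeasurable)
      hb (fun i => hfb i x)
  simp only [inner]
  exact integral_tsum_of_norm_le (fun i => (hf i).integral_prod_right.aestronglyMeasurable)
    (hb.mul_right (ν.real Set.univ))
    (fun i x => norm_integral_le_of_norm_le_const (.of_forall (hfb i x)))

end TermwiseIntegration

lemma summable_one_add_int_sq_inv : Summable fun p : ℤ => (1 + (p : ℝ) ^ 2)⁻¹ := by
  refine (Real.summable_one_div_int_pow.2 one_lt_two).of_norm_bounded_eventually ?_
  filter_upwards [(Set.finite_singleton (0 : ℤ)).compl_mem_cofinite] with p hp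
  have hp : p ≠ 0 := hp
  rw [Real.norm_of_nonneg (by positivity), one_div]
  gcongr
  exact le_add_of_nonneg_left zero_le_one

lemma norm1_ne_top_iff {Φ : ℝ → ℝ → ℤ → ℂ} :
    norm1 Φ ≠ ⊤ ↔ ∃ b : ℤ → ℝ, Summable b ∧ ∀ p x y, ‖Φ x y p‖ ≤ b p := by
  constructor
  · intro h
    refine ⟨fun p => (⨆ x, ⨆ y, (‖Φ x y p‖₊ : ℝ≥0∞)).toReal, ENNReal.summable_toReal h, ?_⟩
    intro p x y
    exact ENNReal.toReal_mono (ENNReal.ne_top_of_tsum_ne_top h p)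
      (le_iSup₂ (f := fun x y => (‖Φ x y p‖₊ : ℝ≥0∞)) x y)
  · rintro ⟨b, hb, hΦb⟩
    refine ne_top_of_le_ne_top hb.tsum_ofReal_ne_top (ENNReal.tsum_le_tsum fun p => ?_)
    refine iSup₂_le fun x y => ?_
    rw [← enorm_eq_nnnorm, ← ofReal_norm]
    exact ENNReal.ofReal_le_ofReal (hΦb p x y)

/-- The periodicity laws of `S^c` without any regularity or decay: the modes `Φ(·, ·, p)` are
sections of line bundles over the torus `ℝ²/ℤ²`. It is the part of `InSc` under which traciality
holds for all measurable functions with a summability bound. -/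
structure IsTwistedPeriodic (c : ℕ) (Φ : ℝ → ℝ → ℤ → ℂ) : Prop where
  periodic_y : ∀ (x y : ℝ) (p : ℤ), Φ x (y + 1) p = Φ x y p
  twisted : ∀ (k : ℤ) (x y : ℝ) (p : ℤ), Φ (x + k) y p =
    Complex.exp (2 * Real.pi * Complex.I * ((c : ℂ) * (k : ℂ) * (p : ℂ) * (y : ℂ))) * Φ x y p

/-- The products `F_q = Φ(·, ·, q) Ψ(·, ·, -q)`, whose translates add up to `(Φ ⋆ Ψ)(·, ·, 0)`. -/
def antidiagonalMul (Φ Ψ : ℝ → ℝ → ℤ → ℂ) : ℝ → ℝ → ℤ → ℂ :=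
  fun x y q => Φ x y q * Ψ x y (-q)

section TraceProperty

variable {c : ℕ} {Φ Ψ : ℝ → ℝ → ℤ → ℂ}

lemma IsTwistedPeriodic.norm_fract (hΦ : IsTwistedPeriodic c Φ) (x y : ℝ) (p : ℤ) :
    ‖Φ (Int.fract x) (Int.fract y) p‖ = ‖Φ x y p‖ := by
  have hy : Φ (Int.fract x) (Int.fract y) p = Φ (Int.fract x) y p := by
    have hper : Function.Periodic (fun y => Φ (Int.fract x) y p) 1 := (hΦ.periodic_y _ · p)
    simpa only [mul_one, Int.self_sub_floor] using hper.sub_int_mul_eq (x := y) ⌊y⌋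
  have hx := hΦ.twisted ⌊x⌋ (Int.fract x) y p
  rw [Int.fract_add_floor] at hx
  rw [hy, hx, norm_mul, Complex.norm_exp]
  simp

lemma InSc.isTwistedPeriodic (hΦ : InSc c Φ) : IsTwistedPeriodic c Φ :=
  ⟨hΦ.periodic_y, hΦ.twisted⟩

lemma InSc.exists_abs_eval_mul_norm_le (hΦ : InSc c Φ) (P : Polynomial ℤ) :
    ∃ C : ℝ, ∀ (x y : ℝ) (p : ℤ), |((P.eval p : ℤ) : ℝ)| * ‖Φ x y p‖ ≤ C := by
  obtain ⟨C, hC⟩ := hΦ.poly_bounded P 0 0 (Set.Icc 0 1 ×ˢ Set.Icc 0 1)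
    (isCompact_Icc.prod isCompact_Icc)
  refine ⟨C, fun x y p => ?_⟩
  have hfract (t : ℝ) : Int.fract t ∈ Set.Icc (0 : ℝ) 1 :=
    ⟨Int.fract_nonneg t, (Int.fract_lt_one t).le⟩
  simpa only [iteratedDeriv_zero, hΦ.isTwistedPeriodic.norm_fract] using
    hC (Int.fract x) (Int.fract y) p ⟨hfract x, hfract y⟩

lemma InSc.norm1_ne_top (hΦ : InSc c Φ) : norm1 Φ ≠ ⊤ := by
  obtain ⟨C, hC⟩ := hΦ.exists_abs_eval_mul_norm_le (1 + Polynomial.X ^ 2)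
  refine norm1_ne_top_iff.2 ⟨_, summable_one_add_int_sq_inv.mul_left C, fun p x y => ?_⟩
  have hpos : 0 < 1 + (p : ℝ) ^ 2 := by positivity
  have h : (1 + (p : ℝ) ^ 2) * ‖Φ x y p‖ ≤ C := by
    simpa [abs_of_pos hpos] using hC x y p
  rwa [← div_eq_mul_inv, le_div_iff₀' hpos]

lemma InSc.exists_norm_le (hΦ : InSc c Φ) : ∃ C : ℝ, ∀ x y p, ‖Φ x y p‖ ≤ C := by
  simpa using hΦ.exists_abs_eval_mul_norm_le 1

lemma InSc.measurable (hΦ : InSc c Φ) (p : ℤ) : Measurable fun z : ℝ × ℝ => Φ z.1 z.2 p :=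
  (hΦ.smooth p).continuous.measurable

lemma antidiagonalMul_swap (Φ Ψ : ℝ → ℝ → ℤ → ℂ) (x y : ℝ) (q : ℤ) :
    antidiagonalMul Ψ Φ x y q = antidiagonalMul Φ Ψ x y (-q) := by
  simp only [antidiagonalMul, neg_neg, mul_comm]

lemma norm1_antidiagonalMul_comm (Φ Ψ : ℝ → ℝ → ℤ → ℂ) :
    norm1 (antidiagonalMul Φ Ψ) = norm1 (antidiagonalMul Ψ Φ) := by
  simp only [norm1, antidiagonalMul_swap Φ Ψ]
  exact ((Equiv.neg ℤ).tsum_eq _).symm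

lemma norm1_antidiagonalMul_ne_top (hΦ : norm1 Φ ≠ ⊤)
    (hΨ : ∃ C : ℝ, ∀ x y p, ‖Ψ x y p‖ ≤ C) : norm1 (antidiagonalMul Φ Ψ) ≠ ⊤ := by
  obtain ⟨C, hΨC⟩ := hΨ
  obtain ⟨b, hb, hΦb⟩ := norm1_ne_top_iff.1 hΦ
  refine norm1_ne_top_iff.2 ⟨_, hb.mul_right C, fun q x y => ?_⟩
  exact norm_mul_le_of_le (hΦb q x y) (hΨC x y (-q))

lemma starProd_zero (hbar μ ν : ℝ) (Φ Ψ : ℝ → ℝ → ℤ → ℂ) (x y : ℝ) :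
    starProd hbar μ ν Φ Ψ x y 0 =
      ∑' q : ℤ, antidiagonalMul Φ Ψ (x - hbar * q * μ) (y - hbar * q * ν) q := by
  simp only [starProd, antidiagonalMul, sub_zero, zero_sub]

lemma IsTwistedPeriodic.antidiagonalMul_add_one_left (hΦ : IsTwistedPeriodic c Φ)
    (hΨ : IsTwistedPeriodic c Ψ) (x y : ℝ) (q : ℤ) :
    antidiagonalMul Φ Ψ (x + 1) y q = antidiagonalMul Φ Ψ x y q := by
  have hΦ₁ := hΦ.twisted 1 x y q
  have hΨ₁ := hΨ.twisted 1 x y (-q)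
  rw [Int.cast_one] at hΦ₁ hΨ₁
  rw [antidiagonalMul, hΦ₁, hΨ₁, mul_mul_mul_comm, ← Complex.exp_add, antidiagonalMul]
  -- the phases `e(cqy)` and `e(-cqy)` cancel
  simp

lemma IsTwistedPeriodic.antidiagonalMul_add_one_right (hΦ : IsTwistedPeriodic c Φ)
    (hΨ : IsTwistedPeriodic c Ψ) (x y : ℝ) (q : ℤ) :
    antidiagonalMul Φ Ψ x (y + 1) q = antidiagonalMul Φ Ψ x y q := by
  simp only [antidiagonalMul, hΦ.periodic_y, hΨ.periodic_y]

lemma tr_starProd_eq_tsum (hbar μ ν : ℝ) (hΦ : IsTwistedPeriodic c Φ)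
    (hΨ : IsTwistedPeriodic c Ψ) (hΦm : ∀ p, Measurable fun z : ℝ × ℝ => Φ z.1 z.2 p)
    (hΨm : ∀ p, Measurable fun z : ℝ × ℝ => Ψ z.1 z.2 p)
    (hΦΨ : norm1 (antidiagonalMul Φ Ψ) ≠ ⊤) :
    tr (starProd hbar μ ν Φ Ψ) =
      ∑' q : ℤ, ∫ x in (0 : ℝ)..1, ∫ y in (0 : ℝ)..1, antidiagonalMul Φ Ψ x y q := by
  obtain ⟨b, hb, hΦΨb⟩ := norm1_ne_top_iff.1 hΦΨ
  have hmeas (q : ℤ) : StronglyMeasurable fun z : ℝ × ℝ =>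
      antidiagonalMul Φ Ψ (z.1 - hbar * q * μ) (z.2 - hbar * q * ν) q := by
    have hshift : Measurable fun z : ℝ × ℝ => (z.1 - hbar * q * μ, z.2 - hbar * q * ν) := by
      fun_prop
    exact (((hΦm q).mul (hΨm (-q))).comp hshift).stronglyMeasurable
  calc
    tr (starProd hbar μ ν Φ Ψ)
    _ = ∫ x in (0 : ℝ)..1, ∫ y in (0 : ℝ)..1, ∑' q : ℤ,
          antidiagonalMul Φ Ψ (x - hbar * q * μ) (y - hbar * q * ν) q := by
      simp only [tr, starProd_zero]
    _ = ∑' q : ℤ, ∫ x in (0 : ℝ)..1, ∫ y in (0 : ℝ)..1,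
          antidiagonalMul Φ Ψ (x - hbar * q * μ) (y - hbar * q * ν) q := by
      simp only [intervalIntegral.integral_of_le zero_le_one]
      exact integral_integral_tsum_of_norm_le hmeas hb fun q _ _ => hΦΨb q _ _
    _ = ∑' q : ℤ, ∫ x in (0 : ℝ)..1, ∫ y in (0 : ℝ)..1, antidiagonalMul Φ Ψ x y q :=
      tsum_congr fun q => intervalIntegral_intervalIntegral_comp_sub_right_of_periodic
        (F := fun x y => antidiagonalMul Φ Ψ x y q)
        (fun x => funext fun y => hΦ.antidiagonalMul_add_one_left hΨ x y q)
        (fun x y => hΦ.antidiagonalMul_add_one_right hΨ x y q) _ _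

theorem tr_tracial_general (hbar μ ν : ℝ) (hΦ : IsTwistedPeriodic c Φ)
    (hΨ : IsTwistedPeriodic c Ψ) (hΦm : ∀ p, Measurable fun z : ℝ × ℝ => Φ z.1 z.2 p)
    (hΨm : ∀ p, Measurable fun z : ℝ × ℝ => Ψ z.1 z.2 p)
    (hΦΨ : norm1 (antidiagonalMul Φ Ψ) ≠ ⊤) :
    tr (starProd hbar μ ν Φ Ψ) = tr (starProd hbar μ ν Ψ Φ) := by
  have hΨΦ : norm1 (antidiagonalMul Ψ Φ) ≠ ⊤ := by rwa [norm1_antidiagonalMul_comm]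
  rw [tr_starProd_eq_tsum hbar μ ν hΦ hΨ hΦm hΨm hΦΨ,
    tr_starProd_eq_tsum hbar μ ν hΨ hΦ hΨm hΦm hΨΦ]
  simp only [antidiagonalMul_swap Φ Ψ]
  exact ((Equiv.neg ℤ).tsum_eq _).symm

end TraceProperty

theorem tr_tracial (c : ℕ) (hc : 0 < c) (hbar μ ν : ℝ) (hμν : μ ^ 2 + ν ^ 2 ≠ 0)
    (Φ Ψ : ℝ → ℝ → ℤ → ℂ) (hΦ : InSc c Φ) (hΨ : InSc c Ψ) :
    tr (starProd hbar μ ν Φ Ψ) = tr (starProd hbar μ ν Ψ Φ) :=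
  tr_tracial_general hbar μ ν hΦ.isTwistedPeriodic hΨ.isTwistedPeriodic
    hΦ.measurable hΨ.measurable (norm1_antidiagonalMul_ne_top hΦ.norm1_ne_top hΨ.exists_norm_le)

end
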